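/- For every line segment [P,Q] in the class 𝒜(P₁,P₃) there exists a left boundary point P_← = P_←(P,Q), active for ℓ(P,Q), whose hinge H_← = H(P_←, ℓ(P,Q)) is a lower hinge and satisfies d_{P,Q}(H_←) ≤ d_{P,Q}(H) for every lower left hinge H of ℓ(P,Q); and there exists a right boundary point P_→ = P_→(P,Q), active for ℓ(P,Q), whose hinge H_→ is a lower hinge and satisfies d_{P,Q}(H_→) ≥ d_{P,Q}(H) for every lower right hinge H of ℓ(P,Q). Moreover d_{P,Q}(H_←) > d_{P,Q}(H_→). -/

import Mathlib

/-!
The extreme hinges are those of the crossing point: if `Z` is the unique intersection of the right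
boundary with the reflected left boundary, then `Z` and its mirror image `W` serve as the
extremal right and left boundary points.

Coordinates are chosen in which the line is the real axis, `P` and `Q` are `-1/2` and `1/2`, the
right side is the upper half plane and reflection is complex conjugation (`chart`). In polar fashion
about the midpoint of `[P,Q]`, the right boundary and the reflected left boundary are the unit level
curves of two gauges, which differ in the open upper half plane except on the ray through `Z`.
Their order is therefore constant on each of the two sectors cut off by this ray (`sector_sign`).

Near `P` the right boundary is inside the reflected left one: the inward normal at `P` points to
the left of the line, since its angle lies between `∠(P,Q)` and `π` (`left_normal`). The upper
bound `π` comes from `P` lying on the lower arc (`normal_im_pos_of_lowerArc`): a boundary point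
above the chord `[P₁,P'₁]` is connected to `Q₆` within the boundary without `P₁, P'₁`, and below the
chord inward normals point upwards. Nontangentiality at `Z` makes the curves swap their order there
and forces the hinge of `Z` to be strictly closer to `P` than that of `W`. Hence active right points
lie on the `P` side of `Z`, and active left points, after reflection, on the `Q` side. For two
points of a convex curve with lower hinges, the one on the `P` side has the closer hinge, which gives
both extremality claims (`crossing_arcs`).

Smoothness of the boundary enters through `enters`: every direction making an acute angle with the
inward normal at a boundary point leads into `D`.
-/

noncomputable section

attribute [local instance] Classical.propDecidable

/-- Real inner product of two complex numbers viewed as vectors of `ℝ²` (identified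
with `ℂ`). -/
def dotR (z w : ℂ) : ℝ := z.re * w.re + z.im * w.im

/-- The straight line `ℓ(A,B)` through the points `A` and `B`. -/
def lineThrough (A B : ℂ) : Set ℂ := {z | ∃ t : ℝ, z = A + t • (B - A)}

/-- The closed ray `ℛ[A,B)` contained in `ℓ(A,B)`, starting from `A` and not
containing `B`. -/
def rayFrom (A B : ℂ) : Set ℂ := {z | ∃ t : ℝ, t ≤ 0 ∧ z = A + t • (B - A)}

/-- Reflection of the point `z` about the line `ℓ(A,B)`. -/
def reflLine (A B z : ℂ) : ℂ :=
  A + (B - A) / (starRingEnd ℂ (B - A)) * (starRingEnd ℂ (z - A))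

/-- The angle `∠(A,B) ∈ [0,π)` between `e₁` and the line `ℓ(A,B)`. -/
def segAngle (A B : ℂ) : ℝ :=
  if Complex.arg (B - A) < 0 then Complex.arg (B - A) + Real.pi
  else if Complex.arg (B - A) = Real.pi then 0
  else Complex.arg (B - A)

/-- The argument of `z`, normalized to lie in `[0, 2π)`; applied to the inward normal
`n(A)` this is the angle `∠(A)` of the paper. -/
def arg2pi (z : ℂ) : ℝ :=
  if Complex.arg z < 0 then Complex.arg z + 2 * Real.pi else Complex.arg z

/-- `C` is on the left of the (non-horizontal) line `ℓ(P,Q)`: moving from `C` in the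
direction `e₁ = 1` by some positive amount lands on the line. -/
def onLeft (P Q C : ℂ) : Prop := ∃ a : ℝ, 0 < a ∧ C + (a : ℂ) ∈ lineThrough P Q

/-- `C` is on the right of the (non-horizontal) line `ℓ(P,Q)`. -/
def onRight (P Q C : ℂ) : Prop := ∃ a : ℝ, 0 < a ∧ C - (a : ℂ) ∈ lineThrough P Q

/-- A boundary point `A ∈ ∂D ∖ ℓ(P,Q)` is active for `ℓ(P,Q)` if its reflection about
`ℓ(P,Q)` lies in the closure of `D`. -/
def IsActive (D : Set ℂ) (P Q A : ℂ) : Prop :=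
  A ∈ frontier D ∧ A ∉ lineThrough P Q ∧ reflLine P Q A ∈ closure D

/-- The closed arc of the curve `C` joining `A` and `B` and avoiding the point `avoid`:
the endpoints together with the part of `C ∖ {A,B}` not in the connected component
of `avoid`. -/
def arcAvoid (C : Set ℂ) (A B avoid : ℂ) : Set ℂ :=
  insert A (insert B ((C \ {A, B}) \ connectedComponentIn (C \ {A, B}) avoid))

/-- The distance function `d_{P,Q}` on `ℓ(P,Q)`: distance to `Q` on the ray `ℛ[Q,P)`,
distance to `P` otherwise (i.e. on `ℛ[P,Q)`). -/
def dPQ (P Q H : ℂ) : ℝ := if H ∈ rayFrom Q P then ‖H - Q‖ else ‖H - P‖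

/-- The setting of the paper: a bounded strictly convex planar domain `D` with `C²`
boundary (encoded by a `C²` unit-speed periodic parametrization `γ` of `∂D`), the unit
inward normal field `n`, an angle `α ∈ (0, π/2)`, and the four distinguished boundary
points `P₁, P'₁, Q₆, Q'₆` whose inward normals make angles `α`, `π−α`, `−α`, `−(π−α)`
with `e₁`. -/
structure MirrorSetup where
  D : Set ℂ
  hOpen : IsOpen D
  hNe : D.Nonempty
  hBdd : Bornology.IsBounded D
  hConv : Convex ℝ D
  hStrict : ∀ x ∈ closure D, ∀ y ∈ closure D, x ≠ y → openSegment ℝ x y ⊆ D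
  γ : ℝ → ℂ
  L : ℝ
  hL : 0 < L
  hγsmooth : ContDiff ℝ 2 γ
  hγper : Function.Periodic γ L
  hγrange : Set.range γ = frontier D
  hγspeed : ∀ t : ℝ, ‖deriv γ t‖ = 1
  hγinj : Set.InjOn γ (Set.Ico 0 L)
  n : ℂ → ℂ
  hn_unit : ∀ A ∈ frontier D, ‖n A‖ = 1
  hn_normal : ∀ A ∈ frontier D, ∀ y ∈ closure D, 0 ≤ dotR (y - A) (n A)
  α : ℝ
  hα : α ∈ Set.Ioo 0 (Real.pi / 2)
  P₁ : ℂ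
  P₁' : ℂ
  Q₆ : ℂ
  Q₆' : ℂ
  hP₁ : P₁ ∈ frontier D
  hP₁n : n P₁ = Complex.exp ((α : ℂ) * Complex.I)
  hP₁' : P₁' ∈ frontier D
  hP₁'n : n P₁' = Complex.exp (((Real.pi - α : ℝ) : ℂ) * Complex.I)
  hQ₆ : Q₆ ∈ frontier D
  hQ₆n : n Q₆ = Complex.exp (-(α : ℂ) * Complex.I)
  hQ₆' : Q₆' ∈ frontier D
  hQ₆'n : n Q₆' = Complex.exp (-((Real.pi - α : ℝ) : ℂ) * Complex.I)

/-- The lower part `∂↓D` of the boundary: the closed arc from `P₁` to `P'₁` not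
containing `Q₆`. -/
def lowerArc (S : MirrorSetup) : Set ℂ := arcAvoid (frontier S.D) S.P₁ S.P₁' S.Q₆

/-- The upper part `∂↑D` of the boundary: the closed arc from `Q'₆` to `Q₆` not
containing `P₁`. -/
def upperArc (S : MirrorSetup) : Set ℂ := arcAvoid (frontier S.D) S.Q₆' S.Q₆ S.P₁

/-- The tangent line to `∂D` at the boundary point `A` (the line through `A`
perpendicular to the inward normal `n(A)`). -/
def tangentLine (S : MirrorSetup) (A : ℂ) : Set ℂ := {z | dotR (z - A) (S.n A) = 0}

/-- `H` is the hinge `H(A, ℓ(P,Q))` of the boundary point `A` at `ℓ(P,Q)`: `A` is active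
for `ℓ(P,Q)` and `H` is an intersection point of `ℓ(P,Q)` with the tangent line
to `∂D` at `A`. -/
def IsHinge (S : MirrorSetup) (P Q A H : ℂ) : Prop :=
  IsActive S.D P Q A ∧ H ∈ lineThrough P Q ∧ H ∈ tangentLine S A

/-- The part `∂_R(P,Q)` of the boundary on the right of `ℓ(P,Q)` (excluding `P`, `Q`). -/
def bdRight (S : MirrorSetup) (P Q : ℂ) : Set ℂ := {A | A ∈ frontier S.D ∧ onRight P Q A}

/-- The part `∂_L(P,Q)` of the boundary on the left of `ℓ(P,Q)` (excluding `P`, `Q`). -/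
def bdLeft (S : MirrorSetup) (P Q : ℂ) : Set ℂ := {A | A ∈ frontier S.D ∧ onLeft P Q A}

/-- The class `𝒜(P₁,P₃)`: line segments `[P,Q]` with `P ∈ ∂↓D`, `Q ∈ ∂↑D`,
`P₁ < P < P₃` and `∠(P,Q) ∈ (α, ∠(P))`. -/
def classA (S : MirrorSetup) (P₃ : ℂ) (P Q : ℂ) : Prop :=
  P ∈ lowerArc S ∧ Q ∈ upperArc S ∧ S.P₁.re < P.re ∧ P.re < P₃.re ∧
  S.α < segAngle P Q ∧ segAngle P Q < arg2pi (S.n P)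

/-- Assumption A3 (for the range `𝒜(P₁,P₃)`): every segment of the class admits at least
one lower left hinge, and no upper right hinge. -/
def AssumptionA3 (S : MirrorSetup) (P₃ : ℂ) : Prop :=
  ∀ P Q : ℂ, classA S P₃ P Q →
    (∃ A H : ℂ, IsHinge S P Q A H ∧ H ∉ rayFrom Q P ∧ onLeft P Q A) ∧
    ¬ ∃ A H : ℂ, IsHinge S P Q A H ∧ H ∈ rayFrom Q P ∧ onRight P Q A

/-- Assumption A4 (for the range `𝒜(P₁,P₃)`): for every segment of the class, the curves
`∂_R(P,Q)` and `∂̃_L(P,Q)` (the reflection of `∂_L(P,Q)` about `ℓ(P,Q)`) intersect at a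
unique point, the intersection is nontangential, and both tangent lines at the
intersection point meet the ray `ℛ[P,Q)`. -/
def AssumptionA4 (S : MirrorSetup) (P₃ : ℂ) : Prop :=
  ∀ P Q : ℂ, classA S P₃ P Q →
    ∃ Z : ℂ, bdRight S P Q ∩ (reflLine P Q '' bdLeft S P Q) = {Z} ∧
      tangentLine S Z ≠ reflLine P Q '' tangentLine S (reflLine P Q Z) ∧
      (tangentLine S Z ∩ rayFrom P Q).Nonempty ∧
      ((reflLine P Q '' tangentLine S (reflLine P Q Z)) ∩ rayFrom P Q).Nonempty

/-! ### The position of crossing convex arcs -/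

/-- The two-dimensional cross product of two complex numbers. -/
def crossR (z w : ℂ) : ℝ := z.re * w.im - z.im * w.re

/-- The ray through `ζ` cuts the open upper half plane into two open sectors, selected by the sign
of `σ`. Continuous functions that agree nowhere in a sector are ordered the same way throughout it,
as the sector is convex. -/
lemma sector_sign (F G : ℂ → ℝ) (hF : Continuous F) (hG : Continuous G) (ζ : ℂ) (σ : ℝ)
    (hne : ∀ w : ℂ, 0 < w.im → 0 < σ * crossR w ζ → F w ≠ G w)
    {a b : ℂ} (ha : 0 < a.im) (ha' : 0 < σ * crossR a ζ) (hb : 0 < b.im)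
    (hb' : 0 < σ * crossR b ζ) (hab : F a < G a) : F b < G b := by
  by_contra hcon
  push Not at hcon
  have hconv : Convex ℝ {w : ℂ | 0 < w.im ∧ 0 < σ * crossR w ζ} := by
    intro x hx y hy s t hs ht hst
    simp only [Set.mem_ofPred_eq, crossR, Complex.add_im, Complex.add_re, Complex.real_smul,
      Complex.mul_re, Complex.mul_im, Complex.ofReal_re, Complex.ofReal_im] at hx hy ⊢
    obtain ⟨hx1, hx2⟩ := hx
    obtain ⟨hy1, hy2⟩ := hy
    rcases hs.eq_or_lt with h | h
    · have : t = 1 := by linarith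
      subst this; subst h
      constructor <;> nlinarith
    · constructor
      · nlinarith [mul_pos h hx1, mul_nonneg ht hy1.le]
      · nlinarith [mul_pos h hx2, mul_nonneg ht hy2.le]
  obtain ⟨c, hc, hc'⟩ := hconv.isPreconnected.intermediate_value₂ (f := F) (g := G)
    ⟨ha, ha'⟩ ⟨hb, hb'⟩ hF.continuousOn hG.continuousOn hab.le hcon
  exact absurd hc' (hne c hc.1 hc.2)

/-- Two points on a common line through the origin, each below the other's support line, agree. -/
lemma eq_of_crossR {a ζ : ℂ} {k h : ℝ} (hζ : 0 < ζ.im) (hk : 0 < k) (hh : 0 < h)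
    (hC : crossR a ζ = 0) (i1 : crossR (a + k) (ζ - a) ≤ 0) (i2 : crossR (ζ + h) (a - ζ) ≤ 0) :
    a = ζ := by
  simp [crossR] at hC i1 i2
  have h1 : a.im = ζ.im := by
    apply le_antisymm
    · by_contra! hcon
      nlinarith
    · by_contra! hcon
      nlinarith
  have h2 : a.re = ζ.re := by
    rw [h1] at hC
    have : (a.re - ζ.re) * ζ.im = 0 := by linarith
    rcases mul_eq_zero.1 this with h | h <;> linarith
  exact Complex.ext h2 h1

/-- The function `F` stands for the gauge of a convex set about `0`, and `F ∘ conj` for that of its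
mirror image. The unit level curves meet in the open upper half plane only at `ζ` (`huniq`), where
their distinct tangent lines pass through `-h` and `-h'` (`hsup`, `hent` and the primed versions).
Just above `-1/2` the first curve lies inside the second (`hnear`). Then `h < h'`; a support
line through `-k` at a point of the first curve inside the second has `k ≤ h`, and one at a point
of the second curve inside the first has `h' ≤ k`.

The tangents at `ζ` show that the curves cross there, so the points to consider lie in the sector of
`-1/2` in the first case and in the opposite sector in the second. There, the comparison of `k` with
`h` or `h'` follows because each of the two points is below the support line at the other. -/
lemma crossing_arcs (F : ℂ → ℝ) (hF : Continuous F)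
    (hpos : ∀ w, w ≠ 0 → 0 < F w)
    (hhom : ∀ (t : ℝ) (w : ℂ), 0 < t → F (t • w) = t * F w)
    (ζ : ℂ) (hζ : 0 < ζ.im)
    (huniq : ∀ w : ℂ, 0 < w.im → F w = 1 → F (starRingEnd ℂ w) = 1 → w = ζ)
    (hnear : ∃ ε₀ : ℝ, 0 < ε₀ ∧ ∀ ε : ℝ, 0 < ε → ε < ε₀ →
      F (starRingEnd ℂ (-(1/2 : ℝ) + (ε : ℝ) * Complex.I)) < 1 ∧
        1 < F (-(1/2 : ℝ) + (ε : ℝ) * Complex.I))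
    (hF1 : F ζ ≤ 1) (hG1 : F (starRingEnd ℂ ζ) ≤ 1)
    (h h' : ℝ) (hh : 0 < h) (hh' : 0 < h') (hne : h ≠ h')
    (hsup : ∀ w, F w ≤ 1 → crossR (ζ + h) (w - ζ) ≤ 0)
    (hsup' : ∀ w, F (starRingEnd ℂ w) ≤ 1 → crossR (ζ + h') (w - ζ) ≤ 0)
    (hent : ∀ v, crossR (ζ + h) v < 0 → ∃ ε₀ : ℝ, 0 < ε₀ ∧ ∀ ε : ℝ, 0 < ε → ε < ε₀ →
      F (ζ + ε • v) < 1)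
    (hent' : ∀ v, crossR (ζ + h') v < 0 → ∃ ε₀ : ℝ, 0 < ε₀ ∧ ∀ ε : ℝ, 0 < ε → ε < ε₀ →
      F (starRingEnd ℂ (ζ + ε • v)) < 1) :
    h < h' ∧
    (∀ (a : ℂ) (k : ℝ), 0 < a.im → 0 < k → F a = 1 → F (starRingEnd ℂ a) ≤ 1 →
      (∀ w, F w ≤ 1 → crossR (a + k) (w - a) ≤ 0) → k ≤ h) ∧
    (∀ (a : ℂ) (k : ℝ), 0 < a.im → 0 < k → F (starRingEnd ℂ a) = 1 → F a ≤ 1 →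
      (∀ w, F (starRingEnd ℂ w) ≤ 1 → crossR (a + k) (w - a) ≤ 0) → h' ≤ k) := by
  set G : ℂ → ℝ := fun w => F (starRingEnd ℂ w) with hGdef
  have hG : Continuous G := hF.comp Complex.continuous_conj
  -- off the ray through `ζ` the two gauges differ
  have hdiff : ∀ w : ℂ, 0 < w.im → F w = G w → crossR w ζ = 0 := by
    intro w hw hFG
    have hw0 : w ≠ 0 := by rintro rfl; simp at hw
    have hc := hpos w hw0
    have hci := inv_pos.2 hc
    have e1 : F ((F w)⁻¹ • w) = 1 := by rw [hhom _ _ hci]; field_simp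
    have e2 : F (starRingEnd ℂ ((F w)⁻¹ • w)) = 1 := by
      have : starRingEnd ℂ ((F w)⁻¹ • w) = (F w)⁻¹ • starRingEnd ℂ w := by
        simp [Complex.real_smul]
      rw [this, hhom _ _ hci]
      change _ * G w = 1
      rw [← hFG]; field_simp
    have him : 0 < ((F w)⁻¹ • w).im := by
      simp only [Complex.smul_im, smul_eq_mul]; positivity
    have := huniq _ him e1 e2
    rw [← this]
    simp only [crossR, Complex.smul_im, Complex.smul_re, smul_eq_mul]
    ring
  -- in the sector of `-1/2` the sign is read off just above `-1/2`
  have hleft : ∀ w : ℂ, 0 < w.im → crossR w ζ < 0 → G w < F w := by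
    intro w hw hcw
    obtain ⟨ε₀, hε₀, hε⟩ := hnear
    obtain ⟨ε, hε1, hε2, hε3⟩ : ∃ ε : ℝ, 0 < ε ∧ ε < ε₀ ∧
        -(1/2) * ζ.im - ε * ζ.re < 0 := by
      have hd : 0 < 4 * (|ζ.re| + 1) := by positivity
      refine ⟨min (ε₀ / 2) (ζ.im / (4 * (|ζ.re| + 1))), by positivity,
        (min_le_left _ _).trans_lt (by linarith), ?_⟩
      set e := min (ε₀ / 2) (ζ.im / (4 * (|ζ.re| + 1)))
      have he : e ≤ ζ.im / (4 * (|ζ.re| + 1)) := min_le_right _ _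
      have he0 : 0 < e := by positivity
      rw [le_div_iff₀ hd] at he
      nlinarith [neg_abs_le ζ.re, abs_nonneg ζ.re]
    obtain ⟨q1, q2⟩ := hε ε hε1 hε2
    refine sector_sign G F hG hF ζ (-1) ?_
      (a := -(1/2 : ℝ) + (ε : ℝ) * Complex.I) ?_ ?_ hw (by linarith) (q1.trans q2)
    · intro v hv hv' e
      have := hdiff v hv e.symm
      linarith
    · simpa using hε1
    · simp [crossR]
      linarith
  -- otherwise a direction from `ζ` towards `-m`, with `h' < m < h`, contradicts that sign
  have hlt : h < h' := by
    by_contra hcon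
    have hlt : h' < h := lt_of_le_of_ne (not_lt.1 hcon) (Ne.symm hne)
    obtain ⟨m, hm1, hm2⟩ := exists_between hlt
    obtain ⟨ε₀, hε₀, hε⟩ := hent (-(m : ℂ) - ζ) (by simp [crossR]; nlinarith)
    obtain ⟨ε, hε1, hε2⟩ := exists_between (lt_min hε₀ one_pos)
    have hq := hε ε hε1 (hε2.trans_le (min_le_left _ _))
    have hε3 : ε < 1 := hε2.trans_le (min_le_right _ _)
    have h1 : G (ζ + ε • (-(m : ℂ) - ζ)) < F (ζ + ε • (-(m : ℂ) - ζ)) := by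
      apply hleft
      · simp; nlinarith
      · simp [crossR]
        nlinarith [mul_pos hε1 (mul_pos (hh'.trans hm1) hζ)]
    have h2 := hsup' (ζ + ε • (-(m : ℂ) - ζ)) (h1.trans hq).le
    simp [crossR] at h2
    nlinarith [mul_pos hε1 (mul_pos (sub_pos.2 hm1) hζ)]
  -- in the opposite sector it is read off at `ζ`, moving away from `-m` with `h < m < h'`
  have hright : ∀ w : ℂ, 0 < w.im → 0 < crossR w ζ → F w < G w := by
    intro w hw hcw
    obtain ⟨m, hm1, hm2⟩ := exists_between hlt
    obtain ⟨ε₀, hε₀, hε⟩ := hent (ζ + m) (by simp [crossR]; nlinarith)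
    obtain ⟨ε, hε1, hε2⟩ := exists_between hε₀
    have hq := hε ε hε1 hε2
    refine sector_sign F G hF hG ζ 1 ?_ (a := ζ + ε • (ζ + m)) ?_ ?_ hw (by linarith) ?_
    · intro v hv hv' e
      have := hdiff v hv e
      linarith
    · simp; nlinarith
    · simp [crossR]
      nlinarith [mul_pos hε1 (mul_pos (hh.trans hm1) hζ)]
    · by_contra hcon
      have h2 := hsup' (ζ + ε • (ζ + m)) ((not_lt.1 hcon).trans hq.le)
      simp [crossR] at h2
      nlinarith [mul_pos hε1 (mul_pos (sub_pos.2 hm2) hζ)]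
  refine ⟨hlt, ?_, ?_⟩
  · intro a k ha hk hFa hGa hs
    have hC : crossR a ζ ≤ 0 := by
      by_contra hcon
      have := hright a ha (not_le.1 hcon)
      change G a ≤ 1 at hGa
      linarith
    have i1 := hs ζ hF1
    have i2 := hsup a hFa.le
    by_contra! hcon
    rcases hC.eq_or_lt with hC0 | hC0
    -- the case `a = ζ` is settled by uniqueness of the support line
    · obtain rfl : a = ζ := eq_of_crossR hζ hk hh hC0 i1 i2
      obtain ⟨m, hm1, hm2⟩ := exists_between hcon
      obtain ⟨ε₀, hε₀, hε⟩ := hent (a + m) (by simp [crossR]; nlinarith)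
      obtain ⟨ε, hε1, hε2⟩ := exists_between hε₀
      have i3 := hs _ (hε ε hε1 hε2).le
      simp [crossR] at i3
      nlinarith [mul_pos hε1 (mul_pos (sub_pos.2 hm2) hζ)]
    · simp [crossR] at i1 i2 hC0
      have : 0 < ζ.im - a.im := by
        by_contra! hh3
        nlinarith
      nlinarith [mul_pos this (sub_pos.2 hcon)]
  · intro a k ha hk hGa hFa hs
    have hC : 0 ≤ crossR a ζ := by
      by_contra hcon
      have := hleft a ha (not_le.1 hcon)
      change G a = 1 at hGa
      linarith
    have i1 := hs ζ hG1
    have i2 := hsup' a hGa.le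
    by_contra! hcon
    rcases hC.eq_or_lt with hC0 | hC0
    · obtain rfl : a = ζ := eq_of_crossR hζ hk hh' hC0.symm i1 i2
      obtain ⟨m, hm1, hm2⟩ := exists_between hcon
      obtain ⟨ε₀, hε₀, hε⟩ := hent' (-(m : ℂ) - a) (by simp [crossR]; nlinarith)
      obtain ⟨ε, hε1, hε2⟩ := exists_between hε₀
      have i3 := hs _ (hε ε hε1 hε2).le
      simp [crossR] at i3
      nlinarith [mul_pos hε1 (mul_pos (sub_pos.2 hm1) hζ)]
    · simp [crossR] at i1 i2 hC0
      have : 0 < a.im - ζ.im := by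
        by_contra! hh3
        nlinarith
      nlinarith [mul_pos this (sub_pos.2 hcon)]

/-! ### Support lines and tangent directions -/

lemma mem_closure_of_frontier (S : MirrorSetup) {A : ℂ} (hA : A ∈ frontier S.D) :
    A ∈ closure S.D := frontier_subset_closure hA

lemma not_mem_of_frontier (S : MirrorSetup) {A : ℂ} (hA : A ∈ frontier S.D) : A ∉ S.D := by
  intro h
  rw [S.hOpen.frontier_eq] at hA
  exact hA.2 h

lemma normal_ne_zero (S : MirrorSetup) {A : ℂ} (hA : A ∈ frontier S.D) :
    0 < (S.n A).re ^ 2 + (S.n A).im ^ 2 := by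
  have h := S.hn_unit A hA
  have h2 : Complex.normSq (S.n A) = 1 := by rw [Complex.normSq_eq_norm_sq, h]; norm_num
  rw [Complex.normSq_apply] at h2
  nlinarith

lemma dot_pos_of_mem (S : MirrorSetup) {A y : ℂ} (hA : A ∈ frontier S.D) (hy : y ∈ S.D) :
    0 < dotR (y - A) (S.n A) := by
  have hc : Continuous (fun t : ℝ => y - t • S.n A) := by fun_prop
  have hev : ∀ᶠ t : ℝ in nhds 0, y - t • S.n A ∈ S.D := by
    apply hc.continuousAt.eventually_mem
    simpa using S.hOpen.mem_nhds hy
  obtain ⟨δ, hδ, hb⟩ := Metric.eventually_nhds_iff.1 hev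
  have h1 := hb (y := δ / 2) (by simp [abs_of_pos hδ]; linarith)
  have h2 := S.hn_normal A hA _ (subset_closure h1)
  have h3 := normal_ne_zero S hA
  simp [dotR] at h2 ⊢
  nlinarith

lemma dot_pos_of_mem_closure (S : MirrorSetup) {A y : ℂ} (hA : A ∈ frontier S.D)
    (hy : y ∈ closure S.D) (hne : y ≠ A) : 0 < dotR (y - A) (S.n A) := by
  have h1 : (1/2 : ℝ) • y + (1/2 : ℝ) • A ∈ S.D :=
    S.hStrict y hy A (mem_closure_of_frontier S hA) hne
      ⟨1/2, 1/2, by norm_num, by norm_num, by norm_num, rfl⟩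
  have h2 := dot_pos_of_mem S hA h1
  simp [dotR] at h2 ⊢
  linarith

/-- Smoothness of `∂D`: from a boundary point, every direction in the open half plane of the inward
normal enters `D`. Otherwise the ray could be separated from `D` by a line, a second support
line at the point, while differentiability of the boundary forces support lines to be tangent. -/
lemma enters (S : MirrorSetup) {A v : ℂ} (hA : A ∈ frontier S.D) (hv : 0 < dotR v (S.n A)) :
    ∃ ε₀ : ℝ, 0 < ε₀ ∧ ∀ ε : ℝ, 0 < ε → ε < ε₀ → A + ε • v ∈ S.D := by
  have hAc := mem_closure_of_frontier S hA
  have key : ∃ ε₀ : ℝ, 0 < ε₀ ∧ A + ε₀ • v ∈ S.D := by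
    by_contra! hcon
    have hconv : Convex ℝ ((fun t : ℝ => A + t • v) '' Set.Ioi 0) := by
      rintro _ ⟨a, ha, rfl⟩ _ ⟨b, hb, rfl⟩ p q hp hq hpq
      refine ⟨p * a + q * b, convex_Ioi (0 : ℝ) ha hb hp hq hpq, ?_⟩
      have hpq' : (p : ℂ) + q = 1 := by exact_mod_cast hpq
      simp only [Complex.real_smul]
      push_cast
      linear_combination (-A) * hpq'
    obtain ⟨f, c, hf1, hf2⟩ := geometric_hahn_banach_open S.hConv S.hOpen hconv (by
      rw [Set.disjoint_left]
      rintro _ hx ⟨t, ht, rfl⟩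
      exact hcon t ht hx)
    have hf3 : ∀ y ∈ closure S.D, f y ≤ c := fun y hy =>
      closure_minimal (fun y hy => (hf1 y hy).le) (isClosed_le f.continuous continuous_const) hy
    have hf4 : ∀ t : ℝ, 0 < t → c ≤ f A + t * f v := by
      intro t ht
      have := hf2 _ ⟨t, ht, rfl⟩
      rwa [map_add, map_smul, smul_eq_mul] at this
    have hfA := hf3 A hAc
    have hcA : c ≤ f A := by
      have hc2 : Continuous (fun t : ℝ => f A + t * f v) := by fun_prop
      have ht : Filter.Tendsto (fun t : ℝ => f A + t * f v) (nhdsWithin 0 (Set.Ioi 0))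
          (nhds (f A)) := (hc2.tendsto' 0 _ (by simp)).mono_left inf_le_left
      exact ge_of_tendsto ht (eventually_mem_nhdsWithin.mono fun t ht => hf4 t ht)
    have hfv : 0 ≤ f v := by have := hf4 1 one_pos; linarith
    have hfrep : ∀ z : ℂ, f z = z.re * f 1 + z.im * f Complex.I := by
      intro z
      have : z = z.re • (1 : ℂ) + z.im • Complex.I := by
        simp [Complex.real_smul]
      conv_lhs => rw [this, map_add, map_smul, map_smul, smul_eq_mul, smul_eq_mul]
    obtain ⟨t₀, ht₀⟩ : A ∈ Set.range S.γ := by rw [S.hγrange]; exact hA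
    have hd : HasDerivAt S.γ (deriv S.γ t₀) t₀ :=
      (S.hγsmooth.differentiable (by norm_num) t₀).hasDerivAt
    set τ := deriv S.γ t₀ with hτ
    have hmem : ∀ t, S.γ t ∈ closure S.D := fun t =>
      mem_closure_of_frontier S (by rw [← S.hγrange]; exact ⟨t, rfl⟩)
    have hfτ : f τ = 0 := by
      have h1 : HasDerivAt (fun t => f (S.γ t)) (f τ) t₀ := f.hasFDerivAt.comp_hasDerivAt t₀ hd
      refine IsLocalMax.hasDerivAt_eq_zero ?_ h1
      refine Filter.Eventually.of_forall fun t => ?_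
      change f (S.γ t) ≤ f (S.γ t₀)
      rw [ht₀]
      exact (hf3 _ (hmem t)).trans hcA
    let g : ℂ →L[ℝ] ℝ := (S.n A).re • Complex.reCLM + (S.n A).im • Complex.imCLM
    have hg : ∀ z, g z = dotR z (S.n A) := by
      intro z; simp [g, dotR]; ring
    have hgτ : g τ = 0 := by
      have h1 : HasDerivAt (fun t => g (S.γ t)) (g τ) t₀ := g.hasFDerivAt.comp_hasDerivAt t₀ hd
      refine IsLocalMin.hasDerivAt_eq_zero ?_ h1
      refine Filter.Eventually.of_forall fun t => ?_
      change g (S.γ t₀) ≤ g (S.γ t)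
      rw [ht₀]
      have := S.hn_normal A hA _ (hmem t)
      rw [← hg, map_sub] at this
      linarith
    have hτ0 : 0 < τ.re ^ 2 + τ.im ^ 2 := by
      have h2 : Complex.normSq τ = 1 := by
        rw [Complex.normSq_eq_norm_sq, hτ, S.hγspeed t₀]; norm_num
      rw [Complex.normSq_apply] at h2
      nlinarith
    obtain ⟨x, hx⟩ := S.hNe
    have hx1 : f (x - A) < 0 := by rw [map_sub]; linarith [hf1 x hx]
    have hx2 := dot_pos_of_mem S hA hx
    rw [hg] at hgτ
    rw [hfrep] at hfτ hx1 hfv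
    simp only [dotR] at hgτ hx2 hv
    set p := f 1
    set q := f Complex.I
    set a := (S.n A).re
    set b := (S.n A).im
    set X := (x - A).re
    set Y := (x - A).im
    -- both functionals vanish on the tangent vector, hence are proportional
    have hdet : p * b = q * a := by
      have e1 : (p * b - q * a) * τ.re = 0 := by linear_combination b * hfτ - q * hgτ
      have e2 : (p * b - q * a) * τ.im = 0 := by linear_combination p * hgτ - a * hfτ
      by_contra hne
      have hne' : p * b - q * a ≠ 0 := sub_ne_zero.2 hne
      have e3 := (mul_eq_zero.1 e1).resolve_left hne'
      have e4 := (mul_eq_zero.1 e2).resolve_left hne'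
      rw [e3, e4] at hτ0
      norm_num at hτ0
    have e5 : (X * p + Y * q) * (v.re * a + v.im * b) = (X * a + Y * b) * (v.re * p + v.im * q) := by
      linear_combination (X * v.im - Y * v.re) * hdet
    nlinarith [mul_pos hx2 hv, mul_nonneg hx2.le hfv, mul_pos (neg_pos.2 hx1) hv]
  obtain ⟨ε₀, hε₀, h⟩ := key
  refine ⟨ε₀, hε₀, fun ε h1 h2 => ?_⟩
  have hne : A ≠ A + ε₀ • v := by
    intro e
    exact not_mem_of_frontier S hA (e ▸ h)
  apply S.hStrict A hAc _ (subset_closure h) hne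
  refine ⟨1 - ε / ε₀, ε / ε₀, ?_, by positivity, by ring, ?_⟩
  · rw [sub_pos, div_lt_one hε₀]; exact h2
  · rw [smul_add, smul_smul, div_mul_cancel₀ _ hε₀.ne', ← add_assoc, ← add_smul]
    simp

/-! ### The gauge of `D` about an interior point -/

/-- The gauge of `D` about the point `O`. -/
def gaugeAt (S : MirrorSetup) (O v : ℂ) : ℝ := gauge ((fun v => O + v) ⁻¹' S.D) v

lemma translate_convex (S : MirrorSetup) (O : ℂ) : Convex ℝ ((fun v => O + v) ⁻¹' S.D) :=
  S.hConv.translate_preimage_right O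

lemma translate_nhds (S : MirrorSetup) {O : ℂ} (hO : O ∈ S.D) :
    ((fun v => O + v) ⁻¹' S.D) ∈ nhds (0 : ℂ) := by
  have hc : Continuous (fun v : ℂ => O + v) := by fun_prop
  exact hc.continuousAt.preimage_mem_nhds (by simpa using S.hOpen.mem_nhds hO)

lemma gaugeAt_continuous (S : MirrorSetup) {O : ℂ} (hO : O ∈ S.D) : Continuous (gaugeAt S O) :=
  continuous_gauge (translate_convex S O) (translate_nhds S hO)

lemma gaugeAt_smul (S : MirrorSetup) (O : ℂ) {t : ℝ} (ht : 0 < t) (v : ℂ) :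
    gaugeAt S O (t • v) = t * gaugeAt S O v := by
  unfold gaugeAt
  rw [gauge_smul_of_nonneg ht.le, smul_eq_mul]

lemma gaugeAt_pos (S : MirrorSetup) {O : ℂ} (hO : O ∈ S.D) {v : ℂ} (hv : v ≠ 0) :
    0 < gaugeAt S O v := by
  refine (gauge_pos (absorbent_nhds_zero (translate_nhds S hO)) ?_).2 hv
  rw [NormedSpace.isVonNBounded_iff]
  have h : (fun v => O + v) ⁻¹' S.D = (fun v => -O + v) '' S.D := by
    ext x
    simp
  rw [h]
  exact ((LipschitzWith.of_dist_le_mul (K := 1) (by simp)).isBounded_image S.hBdd)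

lemma gaugeAt_lt_one (S : MirrorSetup) {O : ℂ} (hO : O ∈ S.D) (v : ℂ) :
    gaugeAt S O v < 1 ↔ O + v ∈ S.D := by
  unfold gaugeAt
  rw [gauge_lt_one_iff_mem_interior (translate_convex S O) (translate_nhds S hO),
    (S.hOpen.preimage (by fun_prop)).interior_eq]
  rfl

lemma gaugeAt_le_one (S : MirrorSetup) {O : ℂ} (hO : O ∈ S.D) (v : ℂ) :
    gaugeAt S O v ≤ 1 ↔ O + v ∈ closure S.D := by
  unfold gaugeAt
  rw [gauge_le_one_iff_mem_closure (translate_convex S O) (translate_nhds S hO)]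
  have := (Homeomorph.addLeft O).preimage_closure S.D
  exact (Set.ext_iff.1 this v).symm

lemma gaugeAt_eq_one (S : MirrorSetup) {O : ℂ} (hO : O ∈ S.D) (v : ℂ) :
    gaugeAt S O v = 1 ↔ O + v ∈ frontier S.D := by
  rw [S.hOpen.frontier_eq, Set.mem_sdiff, ← gaugeAt_le_one S hO, ← gaugeAt_lt_one S hO]
  exact eq_iff_le_not_lt

/-! ### Normals on the lower boundary -/

/-- The boundary points strictly to the left of a directed chord from `A` to `B` form a connected
set, being the radial projection of a half plane from the midpoint of the chord. -/
lemma above_chord_connected (S : MirrorSetup) {A B : ℂ} (hA : A ∈ frontier S.D)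
    (hB : B ∈ frontier S.D) (hAB : A ≠ B) :
    IsPreconnected {X | X ∈ frontier S.D ∧ 0 < crossR (B - A) (X - A)} := by
  set O : ℂ := (1/2 : ℝ) • A + (1/2 : ℝ) • B with hOdef
  have hO : O ∈ S.D := S.hStrict A (mem_closure_of_frontier S hA) B (mem_closure_of_frontier S hB)
    hAB ⟨1/2, 1/2, by norm_num, by norm_num, by norm_num, rfl⟩
  have hconv : Convex ℝ {v : ℂ | 0 < crossR (B - A) v} := by
    refine convex_halfSpace_gt (f := fun v => crossR (B - A) v) (r := (0 : ℝ))
      ⟨fun x y => by simp [crossR]; ring, fun c x => ?_⟩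
    simp only [crossR, Complex.smul_re, Complex.smul_im, smul_eq_mul]
    ring
  have hcr : ∀ v, crossR (B - A) (O + v - A) = crossR (B - A) v := by
    intro v
    simp [crossR, hOdef]; ring
  have hne : ∀ v : ℂ, 0 < crossR (B - A) v → v ≠ 0 := by
    rintro v hv rfl
    simp [crossR] at hv
  have himg : {X | X ∈ frontier S.D ∧ 0 < crossR (B - A) (X - A)}
      = (fun v => O + (gaugeAt S O v)⁻¹ • v) '' {v : ℂ | 0 < crossR (B - A) v} := by
    ext X
    constructor
    · rintro ⟨h1, h2⟩
      have hX : O + (X - O) = X := by ring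
      have hg : gaugeAt S O (X - O) = 1 := (gaugeAt_eq_one S hO _).2 (by rwa [hX])
      refine ⟨X - O, ?_, ?_⟩
      · change 0 < crossR (B - A) (X - O)
        rw [← hcr, hX]; exact h2
      · simp only [hg]; simp
    · rintro ⟨v, hv, rfl⟩
      have hv' : 0 < crossR (B - A) v := hv
      have hp := gaugeAt_pos S hO (hne v hv')
      refine ⟨?_, ?_⟩
      · rw [← gaugeAt_eq_one S hO, gaugeAt_smul S O (inv_pos.2 hp)]
        field_simp
      · rw [hcr]
        have : crossR (B - A) ((gaugeAt S O v)⁻¹ • v) = (gaugeAt S O v)⁻¹ * crossR (B - A) v := by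
          simp [crossR]; ring
        rw [this]; positivity
  rw [himg]
  refine hconv.isPreconnected.image _ ?_
  refine ContinuousOn.add continuousOn_const (ContinuousOn.fun_smul ?_ continuousOn_id)
  exact (gaugeAt_continuous S hO).continuousOn.inv₀ fun v hv => ne_of_gt (gaugeAt_pos S hO (hne v hv))

/-- Boundary points other than `P₁, P'₁` that are not strictly above the chord `[P₁,P'₁]` have an
upward pointing inward normal: the vertical line through such a point crosses the chord above it. -/
lemma normal_im_pos_of_below (S : MirrorSetup) {X : ℂ} (hX : X ∈ frontier S.D) (h1 : X ≠ S.P₁)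
    (h2 : X ≠ S.P₁') (hbelow : crossR (S.P₁' - S.P₁) (X - S.P₁) ≤ 0) : 0 < (S.n X).im := by
  have hs : 0 < Real.sin S.α := Real.sin_pos_of_pos_of_lt_pi S.hα.1 (by linarith [S.hα.2, Real.pi_pos])
  have hc : 0 < Real.cos S.α := Real.cos_pos_of_mem_Ioo ⟨by linarith [S.hα.1, Real.pi_pos], S.hα.2⟩
  have r1 : (S.n S.P₁).re = Real.cos S.α := by rw [S.hP₁n, Complex.exp_ofReal_mul_I_re]
  have i1 : (S.n S.P₁).im = Real.sin S.α := by rw [S.hP₁n, Complex.exp_ofReal_mul_I_im]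
  have r2 : (S.n S.P₁').re = -Real.cos S.α := by
    rw [S.hP₁'n, Complex.exp_ofReal_mul_I_re, Real.cos_pi_sub]
  have i2 : (S.n S.P₁').im = Real.sin S.α := by
    rw [S.hP₁'n, Complex.exp_ofReal_mul_I_im, Real.sin_pi_sub]
  have hne : S.P₁' ≠ S.P₁ := by
    intro e
    rw [e] at r2
    linarith
  have cl : ∀ {Y}, Y ∈ frontier S.D → Y ∈ closure S.D := fun h => mem_closure_of_frontier S h
  have a1 := dot_pos_of_mem_closure S S.hP₁ (cl S.hP₁') hne
  have a2 := dot_pos_of_mem_closure S S.hP₁' (cl S.hP₁) hne.symm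
  have b1 := dot_pos_of_mem_closure S S.hP₁ (cl hX) h1
  have b2 := dot_pos_of_mem_closure S S.hP₁' (cl hX) h2
  have c1 := dot_pos_of_mem_closure S hX (cl S.hP₁) h1.symm
  have c2 := dot_pos_of_mem_closure S hX (cl S.hP₁') h2.symm
  simp only [dotR, r1, i1, r2, i2, crossR, Complex.sub_re, Complex.sub_im] at *
  set c := Real.cos S.α
  set s := Real.sin S.α
  set nx := (S.n X).re
  set ny := (S.n X).im
  obtain ⟨ex, hex⟩ : ∃ ex, ex = S.P₁'.re - S.P₁.re := ⟨_, rfl⟩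
  obtain ⟨ey, hey⟩ : ∃ ey, ey = S.P₁'.im - S.P₁.im := ⟨_, rfl⟩
  obtain ⟨dx, hdx⟩ : ∃ dx, dx = X.re - S.P₁.re := ⟨_, rfl⟩
  obtain ⟨dy, hdy⟩ : ∃ dy, dy = X.im - S.P₁.im := ⟨_, rfl⟩
  rw [← hex, ← hey] at a1
  rw [← hex, ← hey, ← hdx, ← hdy] at hbelow
  rw [← hdx, ← hdy] at b1
  have a2' : 0 < ex * c - ey * s := by rw [hex, hey]; linarith
  have b2' : 0 < -(dx - ex) * c + (dy - ey) * s := by rw [hex, hey, hdx, hdy]; linarith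
  have c1' : 0 < -dx * nx - dy * ny := by rw [hdx, hdy]; linarith
  have c2' : 0 < (ex - dx) * nx + (ey - dy) * ny := by rw [hex, hey, hdx, hdy]; linarith
  have hex0 : 0 < ex := by nlinarith
  -- the abscissa of `X` lies strictly between those of the endpoints of the chord
  have hdx0 : 0 < dx := by
    by_contra! hcon
    nlinarith [mul_nonneg (neg_nonneg.2 hcon) a1.le, mul_pos hex0 b1, mul_nonneg hs.le (sub_nonneg.2 hbelow)]
  have hdx1 : dx < ex := by
    by_contra! hcon
    nlinarith [mul_nonneg (sub_nonneg.2 hcon) a2'.le, mul_pos hex0 b2', mul_nonneg hs.le (sub_nonneg.2 hbelow)]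
  have h3 : 0 < ny * (dx * ey - ex * dy) := by
    nlinarith [mul_pos c1' (sub_pos.2 hdx1), mul_pos c2' hdx0]
  by_contra! hcon
  nlinarith [mul_nonneg (neg_nonneg.2 hcon) (sub_nonneg.2 hbelow)]

lemma normal_im_pos_of_lowerArc (S : MirrorSetup) {P : ℂ} (hP : P ∈ lowerArc S) :
    P ∈ frontier S.D ∧ 0 < (S.n P).im := by
  have hs : 0 < Real.sin S.α := Real.sin_pos_of_pos_of_lt_pi S.hα.1 (by linarith [S.hα.2, Real.pi_pos])
  have hc : 0 < Real.cos S.α := Real.cos_pos_of_mem_Ioo ⟨by linarith [S.hα.1, Real.pi_pos], S.hα.2⟩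
  have r1 : (S.n S.P₁).re = Real.cos S.α := by rw [S.hP₁n, Complex.exp_ofReal_mul_I_re]
  have i1 : (S.n S.P₁).im = Real.sin S.α := by rw [S.hP₁n, Complex.exp_ofReal_mul_I_im]
  have r2 : (S.n S.P₁').re = -Real.cos S.α := by
    rw [S.hP₁'n, Complex.exp_ofReal_mul_I_re, Real.cos_pi_sub]
  have i2 : (S.n S.P₁').im = Real.sin S.α := by
    rw [S.hP₁'n, Complex.exp_ofReal_mul_I_im, Real.sin_pi_sub]
  have i3 : (S.n S.Q₆).im = -Real.sin S.α := by
    rw [S.hQ₆n, ← Complex.ofReal_neg, Complex.exp_ofReal_mul_I_im, Real.sin_neg]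
  rcases hP with rfl | rfl | ⟨⟨hPf, hPne⟩, hPc⟩
  · exact ⟨S.hP₁, by rw [i1]; exact hs⟩
  · exact ⟨S.hP₁', by rw [i2]; exact hs⟩
  refine ⟨hPf, ?_⟩
  simp only [Set.mem_insert_iff, Set.mem_singleton_iff, not_or] at hPne
  refine normal_im_pos_of_below S hPf hPne.1 hPne.2 ?_
  by_contra! hcon
  apply hPc
  have hQ : 0 < crossR (S.P₁' - S.P₁) (S.Q₆ - S.P₁) := by
    by_contra! hcon2
    have := normal_im_pos_of_below S S.hQ₆ (by intro e; rw [e] at i3; linarith)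
      (by intro e; rw [e] at i3; linarith) hcon2
    linarith
  have hne : S.P₁ ≠ S.P₁' := by
    intro e
    rw [← e] at r2
    linarith
  refine (above_chord_connected S S.hP₁ S.hP₁' hne).subset_connectedComponentIn ⟨S.hQ₆, hQ⟩ ?_
    ⟨hPf, hcon⟩
  rintro X ⟨hX, hX'⟩
  refine ⟨hX, ?_⟩
  rintro (rfl | rfl)
  · simp [crossR] at hX'
  · simp only [crossR] at hX'
    linarith

/-! ### Coordinates adapted to the line -/

/-- The linear part of coordinates along `u` and its perpendicular `I * u`, the latter scaled
by `s`. Changing the sign of `s` amounts to reflection about the line spanned by `u`. -/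
def chart (u : ℂ) (s : ℝ) (w : ℂ) : ℂ := w.re • u + (s * w.im) • (Complex.I * u)

lemma chart_conj (u : ℂ) (s : ℝ) (w : ℂ) : chart u s (starRingEnd ℂ w) = chart u (-s) w := by
  simp [chart]

lemma chart_conj' (u : ℂ) (s : ℝ) (w : ℂ) : chart u (-s) (starRingEnd ℂ w) = chart u s w := by
  simp [chart]

lemma chart_sub (u : ℂ) (s : ℝ) (w v : ℂ) : chart u s (w - v) = chart u s w - chart u s v := by
  simp [chart]; ring

lemma chart_add_smul (u : ℂ) (s ε : ℝ) (w v : ℂ) :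
    chart u s (w + ε • v) = chart u s w + ε • chart u s v := by
  simp [chart]; ring

lemma chart_smul (u : ℂ) (s t : ℝ) (w : ℂ) : chart u s (t • w) = t • chart u s w := by
  simp [chart]; ring

lemma chart_real (u : ℂ) (s x : ℝ) : chart u s (x : ℂ) = x • u := by
  simp [chart]

lemma chart_eq_mul (u : ℂ) (s : ℝ) (w : ℂ) :
    chart u s w = (w.re + s * w.im * Complex.I) * u := by
  simp [chart]; ring

lemma chart_continuous (u : ℂ) (s : ℝ) : Continuous (chart u s) := by
  unfold chart
  fun_prop

lemma chart_eq_zero {u : ℂ} {s : ℝ} (hu : u ≠ 0) (hs : s ≠ 0) {w : ℂ} (h : chart u s w = 0) :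
    w = 0 := by
  rw [chart_eq_mul] at h
  have h1 := (mul_eq_zero.1 h).resolve_right hu
  have hre := congrArg Complex.re h1
  have him := congrArg Complex.im h1
  simp [hs] at hre him
  exact Complex.ext hre him

lemma chart_surj {u : ℂ} {s : ℝ} (hu : u ≠ 0) (hs : s ≠ 0) (O z : ℂ) :
    ∃ w, z = O + chart u s w := by
  refine ⟨⟨((z - O) / u).re, ((z - O) / u).im / s⟩, ?_⟩
  have hs' : (s : ℂ) ≠ 0 := by exact_mod_cast hs
  have h1 : ((((z - O) / u).re : ℂ) + s * ((((z - O) / u).im / s : ℝ) : ℂ) * Complex.I)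
      = (z - O) / u := by
    push_cast
    rw [mul_div_cancel₀ _ hs']
    exact Complex.re_add_im _
  rw [chart_eq_mul]
  simp only
  rw [h1]
  field_simp
  ring

/-- The midpoint of the segment `[P,Q]`. -/
def midPt (P Q : ℂ) : ℂ := (1/2 : ℝ) • P + (1/2 : ℝ) • Q

lemma line_pt (P Q : ℂ) (s t : ℝ) :
    P + t • (Q - P) = midPt P Q + chart (Q - P) s ((t - 1/2 : ℝ) : ℂ) := by
  rw [chart_real, midPt]
  simp only [Complex.real_smul]
  push_cast
  ring

lemma mem_line_iff {P Q : ℂ} (hu : Q - P ≠ 0) {s : ℝ} (hs : s ≠ 0) (w : ℂ) :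
    midPt P Q + chart (Q - P) s w ∈ lineThrough P Q ↔ w.im = 0 := by
  constructor
  · rintro ⟨t, ht⟩
    rw [line_pt P Q s, add_right_inj, ← sub_eq_zero, ← chart_sub] at ht
    have := congrArg Complex.im (chart_eq_zero hu hs ht)
    simpa using this
  · intro h
    refine ⟨w.re + 1/2, ?_⟩
    rw [line_pt P Q s]
    congr 2
    apply Complex.ext <;> simp [h]

lemma refl_chart {P Q : ℂ} (hu : Q - P ≠ 0) (s : ℝ) (w : ℂ) :
    reflLine P Q (midPt P Q + chart (Q - P) s w)
      = midPt P Q + chart (Q - P) s (starRingEnd ℂ w) := by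
  have hu' : starRingEnd ℂ (Q - P) ≠ 0 := (map_ne_zero _).2 hu
  have e : midPt P Q + chart (Q - P) s w - P = ((1/2 + w.re) + s * w.im * Complex.I) * (Q - P) := by
    rw [chart_eq_mul]
    simp only [midPt, Complex.real_smul]; push_cast; ring
  rw [reflLine, e, map_mul, ← mul_assoc, mul_right_comm, div_mul_cancel₀ _ hu', chart_eq_mul]
  simp only [map_add, map_mul, Complex.conj_ofReal, Complex.conj_I, Complex.conj_re,
    Complex.conj_im, Complex.ofReal_neg, map_div₀, map_one, map_ofNat, midPt, Complex.real_smul]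
  push_cast
  ring

/-- The scaling `s = -u.im` orients the second coordinate towards the right of the line. -/
lemma onLeft_iff {P Q : ℂ} (hu : (Q - P).im ≠ 0) (w : ℂ) :
    onLeft P Q (midPt P Q + chart (Q - P) (-(Q - P).im) w) ↔ w.im < 0 := by
  have hu0 : Q - P ≠ 0 := by intro h; rw [h] at hu; simp at hu
  set u := Q - P with hudef
  have hN : 0 < u.re ^ 2 + u.im ^ 2 := by positivity
  -- horizontal displacement in the chart
  have key : ∀ a : ℝ, (a : ℂ) = chart u (-u.im)
      ⟨a * u.re / (u.re ^ 2 + u.im ^ 2), a / (u.re ^ 2 + u.im ^ 2)⟩ := by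
    intro a
    apply Complex.ext
    · simp only [chart, Complex.ofReal_re, Complex.add_re, Complex.smul_re, Complex.mul_re,
        Complex.I_re, Complex.I_im, smul_eq_mul]
      field_simp
      ring
    · simp only [chart, Complex.ofReal_im, Complex.add_im, Complex.smul_im, Complex.mul_im,
        Complex.I_re, Complex.I_im, smul_eq_mul]
      field_simp
      ring
  have key2 : ∀ a : ℝ, midPt P Q + chart u (-u.im) w + (a : ℂ) ∈ lineThrough P Q ↔
      w.im + a / (u.re ^ 2 + u.im ^ 2) = 0 := by
    intro a
    have e : midPt P Q + chart u (-u.im) w + (a : ℂ) = midPt P Q + chart u (-u.im)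
        (w + ⟨a * u.re / (u.re ^ 2 + u.im ^ 2), a / (u.re ^ 2 + u.im ^ 2)⟩) := by
      have := chart_add_smul u (-u.im) 1 w
        ⟨a * u.re / (u.re ^ 2 + u.im ^ 2), a / (u.re ^ 2 + u.im ^ 2)⟩
      rw [one_smul, one_smul, ← key] at this
      rw [this, add_assoc]
    rw [e, hudef, mem_line_iff (P := P) (Q := Q) hu0 (by rw [← hudef]; simpa using hu)]
    simp
  unfold onLeft
  simp only [key2]
  constructor
  · rintro ⟨a, ha, h⟩
    have : 0 < a / (u.re ^ 2 + u.im ^ 2) := by positivity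
    linarith
  · intro h
    refine ⟨-w.im * (u.re ^ 2 + u.im ^ 2), by nlinarith, ?_⟩
    field_simp
    ring

lemma onRight_iff {P Q : ℂ} (hu : (Q - P).im ≠ 0) (w : ℂ) :
    onRight P Q (midPt P Q + chart (Q - P) (-(Q - P).im) w) ↔ 0 < w.im := by
  have hu0 : Q - P ≠ 0 := by intro h; rw [h] at hu; simp at hu
  -- reduction to the left side by the point symmetry about the midpoint
  have sym : ∀ z, z ∈ lineThrough P Q ↔ 2 * midPt P Q - z ∈ lineThrough P Q := by
    have one : ∀ z, z ∈ lineThrough P Q → 2 * midPt P Q - z ∈ lineThrough P Q := by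
      rintro z ⟨t, rfl⟩
      refine ⟨1 - t, ?_⟩
      simp only [midPt, Complex.real_smul]; push_cast; ring
    intro z
    refine ⟨one z, fun h => ?_⟩
    have := one _ h
    rwa [sub_sub_cancel] at this
  have h := onLeft_iff hu (-w)
  rw [Complex.neg_im, neg_lt_zero] at h
  rw [← h]
  unfold onRight onLeft
  refine exists_congr fun a => and_congr_right fun _ => ?_
  rw [sym]
  have hneg : chart (Q - P) (-(Q - P).im) (-w) = -chart (Q - P) (-(Q - P).im) w := by
    simp [chart]; ring
  rw [hneg]
  ring_nf

/-- The line through `P` and `Q` carries its angle: `u` is a nonzero real multiple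
of `exp (θ I)`, so an angle of `n` in `(θ, π)` puts `n` on the left of the line. -/
lemma left_normal {P Q n : ℂ} {α : ℝ} (hα : 0 < α) (h1 : α < segAngle P Q)
    (h2 : segAngle P Q < arg2pi n) (hn : 0 < n.im) :
    0 < (Q - P).im * crossR (Q - P) n := by
  set u := Q - P with hu
  set θ := segAngle P Q with hθ
  have harg : arg2pi n = n.arg := by
    unfold arg2pi
    rw [if_neg]
    rw [Complex.arg_neg_iff]
    linarith
  rw [harg] at h2
  have hnpi : n.arg < Real.pi := lt_of_le_of_ne (Complex.arg_le_pi n) (by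
    intro h
    rw [Complex.arg_eq_pi_iff] at h
    linarith [h.2])
  have hn0 : n ≠ 0 := by rintro rfl; simp at hn
  have hu0 : u ≠ 0 := by
    intro h
    have : θ = 0 := by
      rw [hθ]; unfold segAngle; rw [← hu, h]; simp
    linarith
  have hex : ∃ ρ : ℝ, ρ ≠ 0 ∧ u.re = ρ * Real.cos θ ∧ u.im = ρ * Real.sin θ := by
    have hnu : ‖u‖ ≠ 0 := by simpa using hu0
    have e1 := Complex.norm_mul_cos_arg u
    have e2 := Complex.norm_mul_sin_arg u
    have hθ' := hθ
    unfold segAngle at hθ'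
    rw [← hu] at hθ'
    split_ifs at hθ' with c1 c2
    · refine ⟨-‖u‖, by simpa using hu0, ?_, ?_⟩
      · rw [hθ', Real.cos_add_pi, ← e1]; ring
      · rw [hθ', Real.sin_add_pi, ← e2]; ring
    · linarith
    · exact ⟨‖u‖, hnu, by rw [hθ', e1], by rw [hθ', e2]⟩
  obtain ⟨ρ, hρ, er, ei⟩ := hex
  have f1 := Complex.norm_mul_cos_arg n
  have f2 := Complex.norm_mul_sin_arg n
  have hnn : 0 < ‖n‖ := by simpa using hn0
  have s1 : 0 < Real.sin θ := Real.sin_pos_of_pos_of_lt_pi (by linarith) (by linarith)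
  have s2 : 0 < Real.sin (n.arg - θ) := Real.sin_pos_of_pos_of_lt_pi (by linarith) (by linarith)
  have : u.im * crossR u n = ρ ^ 2 * ‖n‖ * Real.sin θ * Real.sin (n.arg - θ) := by
    rw [crossR, er, ei, ← f1, ← f2, Real.sin_sub]; ring
  rw [this]
  positivity

/-! ### Hinges in coordinates -/

/-- In coordinates, the inward normal form at a boundary point `a` in the upper half plane whose
tangent meets the line at `-k` is a negative multiple of the cross product with `a + k`. -/
lemma normal_form (S : MirrorSetup) {O u a : ℂ} {s k : ℝ} (hO : O ∈ S.D) (ha : 0 < a.im)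
    (hk : 0 < k) (hA : O + chart u s a ∈ frontier S.D)
    (hH : O + chart u s ((-k : ℝ) : ℂ) ∈ tangentLine S (O + chart u s a)) :
    ∃ κ : ℝ, κ < 0 ∧ ∀ v, dotR (chart u s v) (S.n (O + chart u s a)) = κ * crossR (a + k) v := by
  have h0 := dot_pos_of_mem S hA hO
  change dotR _ _ = 0 at hH
  set N := S.n (O + chart u s a)
  set p := dotR u N
  set q := dotR (s • (Complex.I * u)) N
  have hrep : ∀ v, dotR (chart u s v) N = v.re * p + v.im * q := by
    intro v
    simp [dotR, chart, p, q]; ring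
  have e1 : O + chart u s ((-k : ℝ) : ℂ) - (O + chart u s a) = chart u s (((-k : ℝ) : ℂ) - a) := by
    rw [chart_sub]; ring
  have e2 : O - (O + chart u s a) = chart u s (-a) := by
    simp [chart]; ring
  rw [e1, hrep] at hH
  rw [e2, hrep] at h0
  simp at hH h0
  have hkp : 0 < k * p := by linarith
  have hp : 0 < p := pos_of_mul_pos_right hkp hk.le
  refine ⟨-p / a.im, div_neg_of_neg_of_pos (by linarith) ha, fun v => ?_⟩
  rw [hrep]
  simp only [crossR, Complex.add_re, Complex.add_im, Complex.ofReal_re, Complex.ofReal_im]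
  field_simp
  linear_combination (-v.im) * hH

lemma support_of_normal_form (S : MirrorSetup) {O u a : ℂ} {s k : ℝ} (hO : O ∈ S.D)
    (ha : 0 < a.im) (hk : 0 < k) (hA : O + chart u s a ∈ frontier S.D)
    (hH : O + chart u s ((-k : ℝ) : ℂ) ∈ tangentLine S (O + chart u s a)) (w : ℂ)
    (hw : gaugeAt S O (chart u s w) ≤ 1) : crossR (a + k) (w - a) ≤ 0 := by
  obtain ⟨κ, hκ, h⟩ := normal_form S hO ha hk hA hH
  rw [gaugeAt_le_one S hO] at hw
  have h1 := S.hn_normal _ hA _ hw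
  have e : O + chart u s w - (O + chart u s a) = chart u s (w - a) := by rw [chart_sub]; ring
  rw [e, h] at h1
  by_contra! hcon
  nlinarith

lemma enters_of_normal_form (S : MirrorSetup) {O u a : ℂ} {s k : ℝ} (hO : O ∈ S.D)
    (ha : 0 < a.im) (hk : 0 < k) (hA : O + chart u s a ∈ frontier S.D)
    (hH : O + chart u s ((-k : ℝ) : ℂ) ∈ tangentLine S (O + chart u s a)) (v : ℂ)
    (hv : crossR (a + k) v < 0) : ∃ ε₀ : ℝ, 0 < ε₀ ∧ ∀ ε : ℝ, 0 < ε → ε < ε₀ →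
      gaugeAt S O (chart u s (a + ε • v)) < 1 := by
  obtain ⟨κ, hκ, h⟩ := normal_form S hO ha hk hA hH
  obtain ⟨ε₀, h0, h1⟩ := enters S hA (v := chart u s v) (by rw [h]; nlinarith)
  refine ⟨ε₀, h0, fun ε h2 h3 => ?_⟩
  rw [gaugeAt_lt_one S hO, chart_add_smul, ← add_assoc]
  exact h1 ε h2 h3

lemma tangent_of_normal_form (S : MirrorSetup) {O u a : ℂ} {s k : ℝ} (hO : O ∈ S.D)
    (ha : 0 < a.im) (hk : 0 < k) (hA : O + chart u s a ∈ frontier S.D)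
    (hH : O + chart u s ((-k : ℝ) : ℂ) ∈ tangentLine S (O + chart u s a)) (w : ℂ) :
    O + chart u s w ∈ tangentLine S (O + chart u s a) ↔ crossR (a + k) (w - a) = 0 := by
  obtain ⟨κ, hκ, h⟩ := normal_form S hO ha hk hA hH
  change dotR _ _ = 0 ↔ _
  have e : O + chart u s w - (O + chart u s a) = chart u s (w - a) := by rw [chart_sub]; ring
  rw [e, h, mul_eq_zero, or_iff_right hκ.ne]

lemma lower_not_mem_ray {P Q : ℂ} (hu : Q - P ≠ 0) {t : ℝ} (ht : t ≤ 0) :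
    P + t • (Q - P) ∉ rayFrom Q P := by
  rintro ⟨t', ht', h⟩
  have : ((t - 1 + t' : ℝ) : ℂ) * (Q - P) = 0 := by
    simp only [Complex.real_smul] at h
    push_cast
    linear_combination h
  have h2 := (mul_eq_zero.1 this).resolve_right hu
  have h3 : t - 1 + t' = 0 := by exact_mod_cast h2
  linarith

lemma dPQ_lower {P Q : ℂ} (hu : Q - P ≠ 0) {t : ℝ} (ht : t ≤ 0) :
    dPQ P Q (P + t • (Q - P)) = -t * ‖Q - P‖ := by
  rw [dPQ, if_neg (lower_not_mem_ray hu ht), add_sub_cancel_left, norm_smul, Real.norm_eq_abs,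
    abs_of_nonpos ht]

/-- A lower hinge lies on the ray beyond `P`, since a tangent line misses `D`. -/
lemma lower_hinge_param (S : MirrorSetup) {P Q A H : ℂ} (hP : P ∈ closure S.D)
    (hQ : Q ∈ closure S.D) (hu : Q - P ≠ 0) (hH : IsHinge S P Q A H) (hlow : H ∉ rayFrom Q P) :
    ∃ t : ℝ, t ≤ 0 ∧ H = P + t • (Q - P) := by
  obtain ⟨⟨hA, -, -⟩, ⟨t, rfl⟩, hT⟩ := hH
  refine ⟨t, ?_, rfl⟩
  by_contra! ht
  have ht1 : t < 1 := by
    by_contra! h1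
    refine hlow ⟨1 - t, by linarith, ?_⟩
    simp only [Complex.real_smul]; push_cast; ring
  have hmem : P + t • (Q - P) ∈ S.D := by
    refine S.hStrict P hP Q hQ (fun e => hu (by rw [e, sub_self])) ⟨1 - t, t, by linarith, ht, by ring, ?_⟩
    simp only [Complex.real_smul]; push_cast; ring
  have := dot_pos_of_mem S hA hmem
  change dotR _ _ = 0 at hT
  linarith

/-! ### The extreme hinges -/

/-- Lemma 3.2 (first part) of the paper: for every segment `[P,Q] ∈ 𝒜(P₁,P₃)` there is a
left boundary point `P_←` with a lower hinge `H_←` minimizing `d_{P,Q}` among all lower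
left hinges, and a right boundary point `P_→` with a lower hinge `H_→` maximizing
`d_{P,Q}` among all lower right hinges; moreover `d_{P,Q}(H_←) > d_{P,Q}(H_→)`. -/
theorem extreme_lower_hinges
    (S : MirrorSetup) (P₃ Q₃ : ℂ)
    (hP₃ : P₃ ∈ lowerArc S) (hQ₃ : Q₃ ∈ upperArc S)
    (hP₃ord : S.P₁.re < P₃.re) (hangle₃ : segAngle P₃ Q₃ = S.α)
    (hA3 : AssumptionA3 S P₃) (hA4 : AssumptionA4 S P₃) :
    ∀ P Q : ℂ, classA S P₃ P Q →
      ∃ Pl Hl Pr Hr : ℂ,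
        onLeft P Q Pl ∧ IsHinge S P Q Pl Hl ∧ Hl ∉ rayFrom Q P ∧
        (∀ A H : ℂ, IsHinge S P Q A H → H ∉ rayFrom Q P → onLeft P Q A →
          dPQ P Q Hl ≤ dPQ P Q H) ∧
        onRight P Q Pr ∧ IsHinge S P Q Pr Hr ∧ Hr ∉ rayFrom Q P ∧
        (∀ A H : ℂ, IsHinge S P Q A H → H ∉ rayFrom Q P → onRight P Q A →
          dPQ P Q H ≤ dPQ P Q Hr) ∧
        dPQ P Q Hr < dPQ P Q Hl := by
  intro P Q hPQ
  obtain ⟨Z, hZ, htan, hr1, hr2⟩ := hA4 P Q hPQ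
  obtain ⟨hPl, hQu, -, -, hang1, hang2⟩ := hPQ
  obtain ⟨hPf, hPn⟩ := normal_im_pos_of_lowerArc S hPl
  have hQf : Q ∈ frontier S.D := by
    rcases hQu with rfl | rfl | h
    · exact S.hQ₆'
    · exact S.hQ₆
    · exact h.1.1
  have hPc := mem_closure_of_frontier S hPf
  have hQc := mem_closure_of_frontier S hQf
  have hnl := left_normal S.hα.1 hang1 hang2 hPn
  have him : (Q - P).im ≠ 0 := by intro h; rw [h] at hnl; simp at hnl
  have hu : Q - P ≠ 0 := by intro h; rw [h] at him; simp at him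
  have hs : -(Q - P).im ≠ 0 := neg_ne_zero.2 him
  have hne : P ≠ Q := fun e => hu (by rw [e, sub_self])
  have hO : midPt P Q ∈ S.D := S.hStrict P hPc Q hQc hne
    ⟨1/2, 1/2, by norm_num, by norm_num, by norm_num, rfl⟩
  have hL := onLeft_iff him
  have hR := onRight_iff him
  have hline := mem_line_iff hu hs
  have hrefl := refl_chart hu (-(Q - P).im)
  have hpt := fun t => line_pt P Q (-(Q - P).im) t
  have hpt' := fun t => line_pt P Q (-(-(Q - P).im)) t
  have hsurj := chart_surj hu hs (midPt P Q)
  have hdP := fun t (ht : t ≤ 0) => dPQ_lower hu ht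
  have hparam := fun A H => lower_hinge_param S (A := A) (H := H) hPc hQc hu
  have hunorm : 0 < ‖Q - P‖ := norm_pos_iff.2 hu
  have hPn' : dotR (chart (Q - P) (-(Q - P).im) Complex.I) (S.n P) < 0 := by
    simp [chart, dotR, crossR] at hnl ⊢
    linarith
  have hraylow : ∀ t : ℝ, t ≤ 0 → P + t • (Q - P) ∉ rayFrom Q P := fun t ht =>
    lower_not_mem_ray hu ht
  have hP0' : P = midPt P Q - 1 / 2 * (Q - P) := by
    simp only [midPt, Complex.real_smul]; push_cast; ring
  set O := midPt P Q with hOdef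
  set s := -(Q - P).im with hsdef
  obtain ⟨ζ, rfl⟩ := hsurj Z
  have hZmem : O + chart (Q - P) s ζ ∈ bdRight S P Q ∩ (reflLine P Q '' bdLeft S P Q) := by
    rw [hZ]; rfl
  obtain ⟨⟨hZf, hZR⟩, W, ⟨hWf, hWL⟩, hWZ⟩ := hZmem
  rw [hR] at hZR
  obtain ⟨ω, rfl⟩ := hsurj W
  have hinj : ∀ {w v : ℂ}, O + chart (Q - P) s w = O + chart (Q - P) s v → w = v := by
    intro w v h
    rw [add_right_inj, ← sub_eq_zero, ← chart_sub] at h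
    exact sub_eq_zero.1 (chart_eq_zero hu hs h)
  rw [hrefl] at hWZ
  obtain rfl : ω = starRingEnd ℂ ζ := by
    rw [← hinj hWZ, Complex.conj_conj]
  rw [hrefl] at htan hr2
  -- the tangents at the crossing point and at its mirror image have lower hinges
  obtain ⟨_, hT, t, ht, rfl⟩ := hr1
  obtain ⟨_, ⟨y, hy, hyt⟩, t', ht', rfl⟩ := hr2
  have hT' : P + t' • (Q - P) ∈ tangentLine S (O + chart (Q - P) s (starRingEnd ℂ ζ)) := by
    obtain ⟨w, rfl⟩ := hsurj y
    rw [hrefl, hpt] at hyt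
    have h1 := hinj hyt
    have h2 : w = ((t' - 1/2 : ℝ) : ℂ) := by
      rw [← Complex.conj_conj w, h1, Complex.conj_ofReal]
    rw [hpt, ← h2]
    exact hy
  set h := 1/2 - t with hh
  set h' := 1/2 - t' with hh'
  have hpos : 0 < h := by linarith
  have hpos' : 0 < h' := by linarith
  have hT1 : O + chart (Q - P) s ((-h : ℝ) : ℂ) ∈ tangentLine S (O + chart (Q - P) s ζ) := by
    have e : -h = t - 1/2 := by rw [hh]; ring
    rw [e, ← hpt]; exact hT
  have hWf' : O + chart (Q - P) (-s) ζ ∈ frontier S.D := by rw [← chart_conj]; exact hWf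
  have hT1' : O + chart (Q - P) (-s) ((-h' : ℝ) : ℂ) ∈ tangentLine S (O + chart (Q - P) (-s) ζ) := by
    have e : -h' = t' - 1/2 := by rw [hh']; ring
    rw [e, ← hpt', ← chart_conj]; exact hT'
  have hhne : h ≠ h' := by
    intro e
    apply htan
    ext z
    obtain ⟨w, rfl⟩ := hsurj z
    rw [tangent_of_normal_form S hO hZR hpos hZf hT1]
    have h2 := tangent_of_normal_form S hO hZR hpos' hWf' hT1' w
    rw [← e, ← chart_conj _ s w, ← chart_conj _ s ζ] at h2
    rw [← h2]
    constructor
    · intro h3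
      exact ⟨_, h3, by rw [hrefl, Complex.conj_conj]⟩
    · rintro ⟨y, hy, hyz⟩
      obtain ⟨v, rfl⟩ := hsurj y
      rw [hrefl] at hyz
      rw [← hinj hyz, Complex.conj_conj]
      exact hy
  have main := crossing_arcs (fun w => gaugeAt S O (chart (Q - P) s w))
    ((gaugeAt_continuous S hO).comp (chart_continuous _ _))
    (fun w hw => gaugeAt_pos S hO fun h0 => hw (chart_eq_zero hu hs h0))
    (fun r w hr => by simp only [chart_smul, gaugeAt_smul S O hr])
    ζ hZR
    (by
      intro w hw h1 h2
      rw [gaugeAt_eq_one S hO] at h1 h2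
      apply hinj
      have : O + chart (Q - P) s w ∈ bdRight S P Q ∩ (reflLine P Q '' bdLeft S P Q) :=
        ⟨⟨h1, (hR w).2 hw⟩, _, ⟨h2, (hL _).2 (by simpa using hw)⟩,
          by rw [hrefl, Complex.conj_conj]⟩
      rw [hZ] at this
      exact this)
    (by
      -- near `P` the perpendicular to the line leaves `D` on the right and enters it on the left
      obtain ⟨ε₀, h0, h1⟩ := enters S hPf (v := -chart (Q - P) s Complex.I) (by
        simp [dotR] at hPn' ⊢; linarith)
      refine ⟨ε₀, h0, fun ε hε hε' => ⟨?_, ?_⟩⟩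
      · rw [gaugeAt_lt_one S hO]
        convert h1 ε hε hε' using 1
        simp [chart]
        linear_combination -hP0'
      · by_contra! hcon
        rw [gaugeAt_le_one S hO] at hcon
        have h2 := S.hn_normal P hPf _ hcon
        have e : O + chart (Q - P) s (-((1/2 : ℝ) : ℂ) + (ε : ℝ) * Complex.I) - P
            = ε • chart (Q - P) s Complex.I := by
          simp [chart]
          linear_combination -hP0'
        rw [e] at h2
        have e2 : dotR (ε • chart (Q - P) s Complex.I) (S.n P)
            = ε * dotR (chart (Q - P) s Complex.I) (S.n P) := by
          simp only [dotR, Complex.smul_re, Complex.smul_im, smul_eq_mul]; ring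
        rw [e2] at h2
        nlinarith)
    ((gaugeAt_eq_one S hO _).2 hZf).le ((gaugeAt_eq_one S hO _).2 hWf).le
    h h' hpos hpos' hhne
    (support_of_normal_form S hO hZR hpos hZf hT1)
    (by
      simp only [chart_conj]
      exact support_of_normal_form S hO hZR hpos' hWf' hT1')
    (enters_of_normal_form S hO hZR hpos hZf hT1)
    (by
      simp only [chart_conj]
      exact enters_of_normal_form S hO hZR hpos' hWf' hT1')
  obtain ⟨m1, m2, m3⟩ := main
  have hζ0 : ζ.im ≠ 0 := hZR.ne'
  refine ⟨O + chart (Q - P) s (starRingEnd ℂ ζ), P + t' • (Q - P), O + chart (Q - P) s ζ,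
    P + t • (Q - P), hWL, ⟨⟨hWf, ?_, ?_⟩, ⟨t', rfl⟩, hT'⟩, hraylow t' ht', ?_,
    (hR _).2 hZR, ⟨⟨hZf, ?_, ?_⟩, ⟨t, rfl⟩, hT⟩, hraylow t ht, ?_, ?_⟩
  · rw [hline]; simpa using hζ0
  · rw [hrefl, Complex.conj_conj]; exact mem_closure_of_frontier S hZf
  · intro A H hH hlow hA
    obtain ⟨r, hr, rfl⟩ := hparam A H hH hlow
    rw [hdP _ ht', hdP _ hr]
    obtain ⟨⟨hAf, -, hAr⟩, -, hAT⟩ := hH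
    obtain ⟨w, rfl⟩ := hsurj A
    rw [hL] at hA
    rw [hrefl] at hAr
    have hAf' := hAf
    rw [← chart_conj'] at hAf hAT
    rw [hpt'] at hAT
    have hr' : r - 1/2 = -(1/2 - r) := by ring
    rw [hr'] at hAT
    have hwim : 0 < (starRingEnd ℂ w).im := by simpa using hA
    have := m3 (starRingEnd ℂ w) (1/2 - r) hwim (by linarith)
      ((gaugeAt_eq_one S hO _).2 (by rw [Complex.conj_conj]; exact hAf'))
      ((gaugeAt_le_one S hO _).2 hAr)
      (by
        simp only [chart_conj]
        exact support_of_normal_form S hO hwim (by linarith) hAf hAT)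
    have : -t' ≤ -r := by linarith
    exact mul_le_mul_of_nonneg_right this hunorm.le
  · rw [hline]; exact hζ0
  · rw [hrefl]; exact mem_closure_of_frontier S hWf
  · intro A H hH hlow hA
    obtain ⟨r, hr, rfl⟩ := hparam A H hH hlow
    rw [hdP _ ht, hdP _ hr]
    obtain ⟨⟨hAf, -, hAr⟩, -, hAT⟩ := hH
    obtain ⟨w, rfl⟩ := hsurj A
    rw [hR] at hA
    rw [hrefl] at hAr
    rw [hpt] at hAT
    have hr' : r - 1/2 = -(1/2 - r) := by ring
    rw [hr'] at hAT
    have := m2 w (1/2 - r) hA (by linarith) ((gaugeAt_eq_one S hO _).2 hAf)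
      ((gaugeAt_le_one S hO _).2 hAr)
      (support_of_normal_form S hO hA (by linarith) hAf hAT)
    have : -r ≤ -t := by linarith
    exact mul_le_mul_of_nonneg_right this hunorm.le
  · rw [hdP _ ht, hdP _ ht']
    have : -t < -t' := by linarith
    exact mul_lt_mul_of_pos_right this hunorm

end
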